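/- A graph G with stability number 2 that contains an induced odd antihole C̄_{2k+1} (k ≥ 2) and a vertex w outside it with at least one neighbor and at least one non-neighbor in C̄_{2k+1} contains, by the BENT theorem, an LS₊-imperfect induced subgraph; in particular, a facet-defining LS₊-perfect graph G with α(G)=2 is either an odd antihole or the complete join of odd antiholes and a (possibly empty) clique. -/

import Mathlib

open Finset

variable {V : Type*}

def IsStableSet (G : SimpleGraph V) (S : Set V) : Prop :=
  S.Pairwise (fun a b => ¬ G.Adj a b)

def ClawFree (G : SimpleGraph V) : Prop :=
  ¬ ∃ x a b c : V, G.Adj x a ∧ G.Adj x b ∧ G.Adj x c ∧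
    a ≠ b ∧ a ≠ c ∧ b ≠ c ∧ ¬ G.Adj a b ∧ ¬ G.Adj a c ∧ ¬ G.Adj b c

noncomputable def stabilityNumber (G : SimpleGraph V) [Fintype V] : ℕ :=
  sSup {n | ∃ S : Finset V, IsStableSet G ↑S ∧ S.card = n}

def STAB (G : SimpleGraph V) [Fintype V] [DecidableEq V] : Set (V → ℝ) :=
  convexHull ℝ {x | ∃ S : Finset V, IsStableSet G ↑S ∧ x = fun i => if i ∈ S then (1:ℝ) else 0}

def ESTAB (G : SimpleGraph V) : Set (V → ℝ) :=
  {x | (∀ i, 0 ≤ x i ∧ x i ≤ 1) ∧ ∀ i j, G.Adj i j → x i + x j ≤ 1}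

def coneSet (K : Set (V → ℝ)) : Set (ℝ × (V → ℝ)) :=
  {p | ∃ (t : ℝ) (y : V → ℝ), 0 ≤ t ∧ y ∈ K ∧ p = (t, t • y)}

def Mplus (K : Set (V → ℝ)) [Fintype V] [DecidableEq V] :
    Set (Matrix (Option V) (Option V) ℝ) :=
  {Y | Y.PosSemidef ∧ (∀ i, Y i none = Y i i) ∧
    (∀ i : V, (Y none (some i), fun j => Y (some j) (some i)) ∈ coneSet K) ∧
    (∀ i : V, (Y none none - Y none (some i),
        fun j => Y (some j) none - Y (some j) (some i)) ∈ coneSet K)}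

def LSplus (K : Set (V → ℝ)) [Fintype V] [DecidableEq V] : Set (V → ℝ) :=
  {x | ∃ Y ∈ Mplus K, Y none none = 1 ∧ ∀ i, Y (some i) none = x i}

def cycleG (n : ℕ) : SimpleGraph (ZMod n) :=
  SimpleGraph.fromRel (fun a b => b = a + 1)

/-- G is an odd antihole: isomorphic to the complement of a chordless odd cycle C_{2k+1},
k ≥ 2. -/
def IsOddAntihole {W : Type*} (G : SimpleGraph W) : Prop :=
  ∃ k : ℕ, 2 ≤ k ∧ Nonempty (G ≃g (cycleG (2 * k + 1))ᶜ)

/-- STAB(G) has a full-support facet. -/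
def HasFullSupportFacet {V : Type*} [Fintype V] [DecidableEq V] (G : SimpleGraph V) : Prop :=
  ∃ (a : V → ℝ) (b : ℝ), (∀ i, a i ≠ 0) ∧
    (∀ x ∈ STAB G, ∑ i, a i * x i ≤ b) ∧
    ∃ f : Fin (Fintype.card V) → (V → ℝ), AffineIndependent ℝ f ∧
      ∀ m, f m ∈ STAB G ∧ ∑ i, a i * f m i = b

/-- G is the complete join of one or more odd antiholes and a (possibly empty) clique. -/
def IsJoinOfOddAntiholesAndClique {V : Type*} (G : SimpleGraph V) : Prop :=
  ∃ (m : ℕ) (B : Fin m → Set V) (Q : Set V), 1 ≤ m ∧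
    (∀ i j, i ≠ j → Disjoint (B i) (B j)) ∧ (∀ i, Disjoint (B i) Q) ∧
    (Q ∪ ⋃ i, B i) = Set.univ ∧
    (∀ i, IsOddAntihole (G.induce (B i))) ∧
    G.IsClique Q ∧
    (∀ i j x y, i ≠ j → x ∈ B i → y ∈ B j → G.Adj x y) ∧
    (∀ i x y, x ∈ B i → y ∈ Q → G.Adj x y)

namespace KeyAux

lemma mem_cone {W : Type*} (G : SimpleGraph W) (t : ℝ) (v : W → ℝ)
    (h1 : ∀ j, 0 ≤ v j) (h2 : ∀ j, v j ≤ t) (ht : 0 ≤ t)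
    (h3 : ∀ j k, G.Adj j k → v j + v k ≤ t) : (t, v) ∈ coneSet (ESTAB G) := by
  rcases ht.eq_or_lt with h0 | hpos
  · refine ⟨0, fun _ => 0, le_refl _, ⟨fun i => by simp, fun i j _ => by simp⟩, ?_⟩
    have : v = fun _ => 0 := by
      funext j
      have := h1 j
      have := h2 j
      linarith
    rw [this, ← h0]
    ext <;> simp
  · refine ⟨t, fun j => v j / t, ht, ⟨fun i => ⟨div_nonneg (h1 i) ht, ?_⟩, fun i j hij => ?_⟩, ?_⟩
    · rw [div_le_one hpos]; exact h2 i
    · rw [← add_div, div_le_one hpos]; exact h3 i j hij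
    · ext j
      · rfl
      · simp only [Pi.smul_apply, smul_eq_mul]
        field_simp

lemma split_sum {W : Type*} [Fintype W] [DecidableEq W] (A : W → W → ℝ)
    (hs : ∀ i j, A i j = A j i) (T : Finset W) :
    (1/2) * ∑ i, ∑ j, A i j = ∑ u ∈ T, ∑ j, A u j - (1/2) * ∑ u ∈ T, ∑ v ∈ T, A u v
      + (1/2) * ∑ u ∈ Tᶜ, ∑ v ∈ Tᶜ, A u v := by
  have e1 : ∀ u, ∑ j, A u j = ∑ j ∈ T, A u j + ∑ j ∈ Tᶜ, A u j := fun u =>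
    (Finset.sum_add_sum_compl T _).symm
  have e2 : ∑ i, ∑ j, A i j = ∑ i ∈ T, ∑ j, A i j + ∑ i ∈ Tᶜ, ∑ j, A i j :=
    (Finset.sum_add_sum_compl T _).symm
  have e3 : ∑ u ∈ Tᶜ, ∑ v ∈ T, A u v = ∑ u ∈ T, ∑ v ∈ Tᶜ, A u v := by
    rw [Finset.sum_comm]
    exact Finset.sum_congr rfl fun u _ => Finset.sum_congr rfl fun v _ => hs _ _
  rw [e2]
  simp only [e1, Finset.sum_add_distrib]
  rw [e3]
  ring

/-- the alternating estimate along a walk -/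
lemma walk_est {W : Type*} (g : ℕ → W) (L : ℕ) (t r : ℝ) (y : W → ℝ)
    (h : ∀ i < L, |t + y (g i) + y (g (i+1))| ≤ r) :
    ∀ i ≤ L, (Even i → |y (g 0) - y (g i)| ≤ i * r) ∧
      (¬ Even i → |t + y (g 0) + y (g i)| ≤ i * r) := by
  intro i
  induction i with
  | zero => intro _; simp
  | succ n ih =>
    intro hn
    obtain ⟨h1, h2⟩ := ih (by omega)
    have h3 := h n (by omega)
    constructor
    · intro he
      have := h2 (by rw [Nat.even_add_one] at he; exact he)
      rw [abs_le] at *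
      push_cast
      constructor <;> nlinarith
    · intro he
      have := h1 (by rw [Nat.even_add_one] at he; exact not_not.mp he)
      rw [abs_le] at *
      push_cast
      constructor <;> nlinarith

lemma stable_pair_adj {W : Type*} [DecidableEq W] (G : SimpleGraph W)
    (h2 : ∀ S : Finset W, IsStableSet G ↑S → S.card ≤ 2) (a b c : W)
    (hab : Gᶜ.Adj a b) (hac : Gᶜ.Adj a c) (hbc : Gᶜ.Adj b c) : False := by
  rw [SimpleGraph.compl_adj] at *
  have := h2 {a, b, c} (by
    intro x hx y hy hxy
    simp only [Finset.coe_insert, Finset.coe_singleton, Set.mem_insert_iff,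
      Set.mem_singleton_iff] at hx hy
    rcases hx with rfl | rfl | rfl <;> rcases hy with rfl | rfl | rfl <;>
      simp_all [G.adj_comm])
  rw [Finset.card_eq_three.mpr ⟨a, b, c, hab.1, hac.1, hbc.1, rfl⟩] at this
  omega

lemma exists_missing {W : Type*} [DecidableEq W] (G : SimpleGraph W)
    (h2 : ∀ S : Finset W, IsStableSet G ↑S → S.card ≤ 2)
    (c : W) (g : ℕ → W) (L : ℕ) (hL : ¬ Even L) (hg0 : g 0 = c) (hgL : g L = c)
    (hg : ∀ i < L, Gᶜ.Adj (g i) (g (i+1)))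
    (n1 n2 n3 : W) (h12 : n1 ≠ n2) (h13 : n1 ≠ n3) (h23 : n2 ≠ n3)
    (a1 : Gᶜ.Adj c n1) (a2 : Gᶜ.Adj c n2) (a3 : Gᶜ.Adj c n3)
    (T : Finset W) (hT : T.card ≤ 3) (hc : c ∉ T) :
    ∃ u v, u ∉ T ∧ v ∉ T ∧ Gᶜ.Adj u v := by
  by_contra hcon
  push Not at hcon
  have m : ∀ n, Gᶜ.Adj c n → n ∈ T := fun n hn => by
    by_contra h
    exact hcon c n hc h hn
  have hsub : ({n1, n2, n3} : Finset W) ⊆ T := by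
    intro x hx
    simp only [Finset.mem_insert, Finset.mem_singleton] at hx
    rcases hx with rfl | rfl | rfl
    · exact m _ a1
    · exact m _ a2
    · exact m _ a3
  have hTe : ({n1, n2, n3} : Finset W) = T := by
    apply Finset.eq_of_subset_of_card_le hsub
    rw [Finset.card_eq_three.mpr ⟨n1, n2, n3, h12, h13, h23, rfl⟩]
    exact hT
  have hadj : ∀ x ∈ T, Gᶜ.Adj c x := by
    intro x hx
    rw [← hTe] at hx
    simp only [Finset.mem_insert, Finset.mem_singleton] at hx
    rcases hx with rfl | rfl | rfl <;> assumption
  have key : ∀ i ≤ L, (g i ∉ T ↔ Even i) := by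
    intro i
    induction i with
    | zero => intro _; simp [hg0, hc]
    | succ n ih =>
      intro hn
      have := ih (by omega)
      have ha := hg n (by omega)
      rw [Nat.even_add_one, ← this, not_not]
      constructor
      · intro h
        by_contra h'
        exact hcon _ _ h' h ha
      · intro h h'
        exact stable_pair_adj G h2 _ _ _ (hadj _ h) (hadj _ h') ha
  have := key L le_rfl
  rw [hgL] at this
  exact hL (this.mp hc)

end KeyAux
namespace KeyAux

/-- the candidate matrix -/
def Ym {W : Type*} [DecidableEq W] (A : W → W → ℝ) (lam : ℝ) (x : W → ℝ) :
    Matrix (Option W) (Option W) ℝ :=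
  fun p q => match p, q with
    | none, none => 1
    | none, some i => x i
    | some i, none => x i
    | some i, some j => if i = j then x i else lam * A i j

lemma Ym_quad {W : Type*} [Fintype W] [DecidableEq W] (A : W → W → ℝ)
    (hs : ∀ i j, A i j = A j i) (h0 : ∀ i, A i i = 0) (lam eps : ℝ) (c : W) (x : W → ℝ)
    (hx : ∀ i, x i = lam * ∑ j, A i j - if i = c then 3/2 * eps else 0)
    (h1 : lam * ((1/2) * ∑ i, ∑ j, A i j) - eps = 1) (t : ℝ) (y : W → ℝ) :
    t * t + 2 * t * ∑ i, x i * y i + ∑ i, ∑ j, y i * ((if i = j then x i else lam * A i j) * y j)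
     = lam * ((1/2) * ∑ i, ∑ j, A i j * (t + y i + y j)^2)
        + eps * (t^2/2 - 3/2 * (t + y c)^2) := by
  have e1 : ∀ i j, y i * ((if i = j then x i else lam * A i j) * y j)
      = lam * (A i j * y i * y j) + if i = j then x i * y i ^ 2 else 0 := by
    intro i j
    split_ifs with h
    · subst h; rw [h0]; ring
    · ring
  have e2 : ∑ i, x i * y i = lam * ∑ i, (∑ j, A i j) * y i - 3/2 * eps * y c := by
    simp only [hx, sub_mul, Finset.sum_sub_distrib, ite_mul, zero_mul, Finset.sum_ite_eq',
      Finset.mem_univ, if_true, mul_assoc, ← Finset.mul_sum]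
  have e3 : ∑ i, x i * y i ^ 2 = lam * ∑ i, (∑ j, A i j) * y i ^ 2 - 3/2 * eps * y c ^ 2 := by
    simp only [hx, sub_mul, Finset.sum_sub_distrib, ite_mul, zero_mul, Finset.sum_ite_eq',
      Finset.mem_univ, if_true, mul_assoc, ← Finset.mul_sum]
  have e4 : ∑ i, ∑ j, A i j * (t + y i + y j)^2 = t^2 * ∑ i, ∑ j, A i j
      + 4 * t * ∑ i, (∑ j, A i j) * y i + 2 * ∑ i, (∑ j, A i j) * y i ^ 2
      + 2 * ∑ i, ∑ j, A i j * y i * y j := by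
    have c1 : ∑ i, ∑ j, A i j * y j = ∑ i, ∑ j, A i j * y i := by
      rw [Finset.sum_comm]
      exact Finset.sum_congr rfl fun u _ => Finset.sum_congr rfl fun v _ => by rw [hs]
    have c2 : ∑ i, ∑ j, A i j * y j ^ 2 = ∑ i, ∑ j, A i j * y i ^ 2 := by
      rw [Finset.sum_comm]
      exact Finset.sum_congr rfl fun u _ => Finset.sum_congr rfl fun v _ => by rw [hs]
    have : ∀ i j, A i j * (t + y i + y j)^2 = t^2 * A i j + (2 * t) * (A i j * y i)
       + (2 * t) * (A i j * y j) + A i j * y i ^ 2 + A i j * y j ^ 2 + 2 * (A i j * y i * y j) := by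
      intro i j; ring
    simp only [this, Finset.sum_add_distrib, ← Finset.mul_sum, c1, c2, Finset.sum_mul]
    simp only [← Finset.sum_mul]
    ring
  simp only [e1, Finset.sum_add_distrib, Finset.sum_ite_eq, Finset.mem_univ, if_true,
    ← Finset.mul_sum]
  rw [e2, e3, e4]
  linear_combination (- t^2) * h1

lemma Ym_psd {W : Type*} [Fintype W] [DecidableEq W] (A : W → W → ℝ)
    (hs : ∀ i j, A i j = A j i) (h0 : ∀ i, A i i = 0) (hp : ∀ i j, 0 ≤ A i j)
    (lam eps : ℝ) (c : W) (x : W → ℝ)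
    (hx : ∀ i, x i = lam * ∑ j, A i j - if i = c then 3/2 * eps else 0)
    (h1 : lam * ((1/2) * ∑ i, ∑ j, A i j) - eps = 1)
    (he : 0 ≤ eps) (g : ℕ → W) (L : ℕ) (hL : ¬ Even L) (hg0 : g 0 = c) (hgL : g L = c)
    (hg : ∀ i < L, A (g i) (g (i+1)) = 1) (hle : 3/2 * (L^2 : ℝ) * eps ≤ lam) :
    (Ym A lam x).PosSemidef := by
  apply Matrix.PosSemidef.of_dotProduct_mulVec_nonneg
  · ext p q
    rcases p with _ | i <;> rcases q with _ | j <;> simp [Ym]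
    rw [hs i j]
    by_cases h : i = j
    · subst h; rfl
    · rw [if_neg h, if_neg (Ne.symm h)]
  · intro z
    obtain ⟨t, ht⟩ : ∃ t, t = z none := ⟨_, rfl⟩
    obtain ⟨y, hy⟩ : ∃ y : W → ℝ, y = fun i => z (some i) := ⟨_, rfl⟩
    have hq := Ym_quad A hs h0 lam eps c x hx h1 t y
    have : star z ⬝ᵥ (Ym A lam x).mulVec z = t * t + 2 * t * ∑ i, x i * y i
        + ∑ i, ∑ j, y i * ((if i = j then x i else lam * A i j) * y j) := by
      simp only [dotProduct, Matrix.mulVec, Fintype.sum_option, Ym, ht, hy, Pi.star_apply,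
        star_trivial, mul_add, Finset.sum_add_distrib, Finset.mul_sum]
      have : ∀ i, z (some i) * (x i * z none) = z none * (x i * z (some i)) := fun i => by ring
      simp only [this, mul_assoc, ← Finset.mul_sum]
      ring
    rw [this, hq]
    obtain ⟨F, hF⟩ : ∃ F, F = (1/2) * ∑ i, ∑ j, A i j * (t + y i + y j)^2 := ⟨_, rfl⟩
    rw [← hF]
    have hnn : ∀ i j, 0 ≤ A i j * (t + y i + y j)^2 := fun i j =>
      mul_nonneg (hp i j) (sq_nonneg _)
    have hedge : ∀ i j, A i j = 1 → (t + y i + y j)^2 ≤ F := by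
      intro i j hij
      have hne : i ≠ j := by
        rintro rfl; rw [h0] at hij; norm_num at hij
      have b1 : ∀ u v, A u v * (t + y u + y v)^2 ≤ ∑ v, A u v * (t + y u + y v)^2 := fun u v =>
        Finset.single_le_sum (f := fun v => A u v * (t + y u + y v)^2)
          (fun w _ => hnn u w) (Finset.mem_univ v)
      have b2 := Finset.add_le_sum (f := fun u => ∑ v, A u v * (t + y u + y v)^2)
          (s := Finset.univ) (fun u _ => Finset.sum_nonneg fun v _ => hnn u v)
          (Finset.mem_univ i) (Finset.mem_univ j) hne
      have b3 := b1 i j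
      have b4 := b1 j i
      rw [hij] at b3
      rw [hs j i, hij] at b4
      have : (t + y j + y i) = (t + y i + y j) := by ring
      rw [this] at b4
      rw [hF]
      linarith
    have hF0 : 0 ≤ F := by
      rw [hF]
      exact mul_nonneg (by norm_num) (Finset.sum_nonneg fun i _ => Finset.sum_nonneg fun j _ => hnn i j)
    have hw := (walk_est g L t (√F) y (fun i hi => by
      apply Real.abs_le_sqrt
      exact hedge _ _ (hg i hi)) L le_rfl).2 hL
    rw [hg0, hgL] at hw
    have hw2 : (t + y c + y c)^2 ≤ (L:ℝ)^2 * F := by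
      rw [← sq_abs]
      calc _ ≤ (L * √F)^2 := by gcongr
        _ = _ := by rw [mul_pow, Real.sq_sqrt hF0]
    have h5 : 3/2 * (t + y c)^2 - t^2/2 ≤ 3/2 * (t + y c + y c)^2 := by
      nlinarith [sq_nonneg (t - 3 * (t + y c + y c))]
    have h6 : eps * (3/2 * (t + y c)^2 - t^2/2) ≤ eps * (3/2 * ((L:ℝ)^2 * F)) := by
      gcongr
      linarith
    have h7 := mul_le_mul_of_nonneg_right hle hF0
    nlinarith

end KeyAux
namespace KeyAux

theorem key {W : Type*} [Fintype W] [DecidableEq W] (G : SimpleGraph W)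
    (h2 : ∀ S : Finset W, IsStableSet G ↑S → S.card ≤ 2)
    (c : W) (g : ℕ → W) (L : ℕ) (hL : ¬ Even L) (hg0 : g 0 = c) (hgL : g L = c)
    (hg : ∀ i < L, Gᶜ.Adj (g i) (g (i+1)))
    (n1 n2 n3 : W) (h12 : n1 ≠ n2) (h13 : n1 ≠ n3) (h23 : n2 ≠ n3)
    (a1 : Gᶜ.Adj c n1) (a2 : Gᶜ.Adj c n2) (a3 : Gᶜ.Adj c n3) :
    LSplus (ESTAB G) ≠ STAB G := by
  classical
  intro hEq
  obtain ⟨A, hA⟩ : ∃ A : W → W → ℝ, ∀ i j, A i j = if Gᶜ.Adj i j then 1 else 0 :=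
    ⟨_, fun _ _ => rfl⟩
  have hs : ∀ i j, A i j = A j i := fun i j => by simp only [hA, SimpleGraph.adj_comm]
  have h0 : ∀ i, A i i = 0 := fun i => by simp [hA]
  have hp : ∀ i j, 0 ≤ A i j := fun i j => by rw [hA]; split_ifs <;> norm_num
  have hp1 : ∀ i j, A i j ≤ 1 := fun i j => by rw [hA]; split_ifs <;> norm_num
  have hA1 : ∀ i j, Gᶜ.Adj i j → A i j = 1 := fun i j h => by rw [hA, if_pos h]
  have hAG : ∀ i j, G.Adj i j → A i j = 0 := fun i j h => by
    rw [hA, if_neg]; rw [SimpleGraph.compl_adj]; tauto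
  obtain ⟨d, hd⟩ : ∃ d : W → ℝ, ∀ i, d i = ∑ j, A i j := ⟨_, fun _ => rfl⟩
  have hd0 : ∀ i, 0 ≤ d i := fun i => by rw [hd]; exact Finset.sum_nonneg fun j _ => hp i j
  have hd1 : ∀ i j, A i j ≤ d i := fun i j => by
    rw [hd]; exact Finset.single_le_sum (f := A i) (fun w _ => hp i w) (Finset.mem_univ j)
  have hd2 : ∀ i j k, j ≠ k → A i j + A i k ≤ d i := fun i j k h => by
    rw [hd]
    exact Finset.add_le_sum (f := A i) (fun w _ => hp i w) (Finset.mem_univ j)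
      (Finset.mem_univ k) h
  have hdc : 3 ≤ d c := by
    rw [hd]
    have : ∑ j ∈ ({n1, n2, n3} : Finset W), A c j ≤ ∑ j, A c j :=
      Finset.sum_le_sum_of_subset_of_nonneg (Finset.subset_univ _) fun w _ _ => hp c w
    rw [Finset.sum_insert (by simp [h12, h13]), Finset.sum_insert (by simp [h23]),
      Finset.sum_singleton, hA1 _ _ a1, hA1 _ _ a2, hA1 _ _ a3] at this
    linarith
  obtain ⟨m, hm⟩ : ∃ m, m = (1/2) * ∑ i, ∑ j, A i j := ⟨_, rfl⟩
  have hsp : ∀ T : Finset W, m = ∑ u ∈ T, d u - (1/2) * ∑ u ∈ T, ∑ v ∈ T, A u v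
      + (1/2) * ∑ u ∈ Tᶜ, ∑ v ∈ Tᶜ, A u v := fun T => by
    rw [hm, split_sum A hs T]; simp only [hd]
  have hrest : ∀ T : Finset W, 0 ≤ (1/2) * ∑ u ∈ Tᶜ, ∑ v ∈ Tᶜ, A u v := fun T =>
    mul_nonneg (by norm_num) (Finset.sum_nonneg fun i _ => Finset.sum_nonneg fun j _ => hp i j)
  have hm3 : 3 ≤ m := by
    have := hsp {c}
    have h' := hrest {c}
    rw [Finset.sum_singleton, Finset.sum_singleton, Finset.sum_singleton, h0] at this
    linarith
  have hLpos : (1:ℝ) ≤ (L:ℝ)^2 := by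
    have : 1 ≤ L := by
      rcases Nat.eq_zero_or_pos L with h | h
      · subst h; exact absurd (by simp) hL
      · exact h
    have : (1:ℝ) ≤ L := by exact_mod_cast this
    nlinarith
  obtain ⟨c0, hc0⟩ : ∃ c0 : ℝ, c0 = 2 / (3 * (L:ℝ)^2) := ⟨_, rfl⟩
  have hc0p : 0 < c0 := by rw [hc0]; positivity
  have hc0L : 3/2 * (L:ℝ)^2 * c0 = 1 := by
    have : (L:ℝ)^2 ≠ 0 := by positivity
    rw [hc0]; generalize (L:ℝ)^2 = q at *; field_simp
  have hc01 : 3/2 * c0 ≤ 1 := by nlinarith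
  obtain ⟨lam, hlam⟩ : ∃ lam : ℝ, lam = 1 / (m - c0) := ⟨_, rfl⟩
  have hmc : 0 < m - c0 := by linarith
  have hlp : 0 < lam := by rw [hlam]; positivity
  have hl1 : lam * m - lam * c0 = 1 := by rw [hlam]; field_simp
  obtain ⟨eps, heps⟩ : ∃ eps, eps = lam * c0 := ⟨_, rfl⟩
  have hep : 0 < eps := by rw [heps]; positivity
  have hel : 3/2 * eps ≤ lam := by rw [heps]; nlinarith
  have heL : 3/2 * (L^2 : ℝ) * eps ≤ lam := by
    rw [heps]; nlinarith
  obtain ⟨x, hx⟩ : ∃ x : W → ℝ, ∀ i, x i = lam * d i - if i = c then 3/2 * eps else 0 :=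
    ⟨_, fun _ => rfl⟩
  have hx0 : ∀ i, 0 ≤ x i := by
    intro i
    rw [hx]
    split_ifs with h
    · subst h; nlinarith
    · have := mul_nonneg hlp.le (hd0 i); linarith
  have hx1 : ∀ i j, lam * A i j ≤ x i := by
    intro i j
    rw [hx]
    split_ifs with h
    · subst h; have := hp1 i j; nlinarith
    · have := mul_le_mul_of_nonneg_left (hd1 i j) hlp.le; linarith
  have hx2 : ∀ i j k, j ≠ k → lam * A i j + lam * A i k ≤ x i := by
    intro i j k hjk
    rw [hx]
    split_ifs with h
    · subst h; have := hp1 i j; have := hp1 i k; nlinarith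
    · have := mul_le_mul_of_nonneg_left (hd2 i j k hjk) hlp.le; linarith
  -- the covering inequality
  have hcov : ∀ T : Finset W, T.card ≤ 3 →
      ∑ u ∈ T, x u - lam * ((1/2) * ∑ u ∈ T, ∑ v ∈ T, A u v) ≤ 1 := by
    intro T hT
    have e : ∑ u ∈ T, x u = lam * ∑ u ∈ T, d u - if c ∈ T then 3/2 * eps else 0 := by
      simp only [hx, Finset.sum_sub_distrib, ← Finset.mul_sum, Finset.sum_ite_eq']
    have e1 := hsp T
    have e2 := hrest T
    rw [e]
    split_ifs with hc
    · have : lam * ∑ u ∈ T, d u - lam * ((1/2) * ∑ u ∈ T, ∑ v ∈ T, A u v) ≤ lam * m := by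
        rw [← mul_sub]; gcongr; linarith
      linarith
    · obtain ⟨u, v, hu, hv, huv⟩ := exists_missing G h2 c g L hL hg0 hgL hg n1 n2 n3 h12 h13 h23
        a1 a2 a3 T hT hc
      have hu' : u ∈ Tᶜ := by simpa using hu
      have hv' : v ∈ Tᶜ := by simpa using hv
      have e3 : 1 ≤ (1/2) * ∑ u ∈ Tᶜ, ∑ v ∈ Tᶜ, A u v := by
        have b2 := Finset.add_le_sum (f := fun u => ∑ v ∈ Tᶜ, A u v)
          (s := Tᶜ) (fun u _ => Finset.sum_nonneg fun v _ => hp u v) hu' hv' huv.ne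
        have b3 : A u v ≤ ∑ v ∈ Tᶜ, A u v := Finset.single_le_sum (f := A u)
          (fun w _ => hp u w) hv'
        have b4 : A v u ≤ ∑ u ∈ Tᶜ, A v u := Finset.single_le_sum (f := A v)
          (fun w _ => hp v w) hu'
        rw [hA1 _ _ huv] at b3
        rw [hA1 _ _ huv.symm] at b4
        linarith
      have : lam * ∑ u ∈ T, d u - lam * ((1/2) * ∑ u ∈ T, ∑ v ∈ T, A u v) ≤ lam * (m - 1) := by
        rw [← mul_sub]; exact mul_le_mul_of_nonneg_left (by linarith) hlp.le
      linarith
  have hc1 : ∀ i, x i ≤ 1 := by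
    intro i
    have := hcov {i} (by simp)
    simpa [h0] using this
  have hc2 : ∀ i j, i ≠ j → x i + x j - lam * A i j ≤ 1 := by
    intro i j hij
    have := hcov {i, j} (by rw [Finset.card_pair hij]; norm_num)
    simp only [Finset.sum_pair hij, h0, hs j i] at this
    linarith
  have hc3 : ∀ i j k, i ≠ j → i ≠ k → G.Adj j k →
      x i + x j + x k - lam * A i j - lam * A i k ≤ 1 := by
    intro i j k hij hik hjk
    have hjk' := hjk.ne
    have := hcov {i, j, k} (by rw [Finset.card_eq_three.mpr ⟨i, j, k, hij, hik, hjk', rfl⟩])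
    have hi : i ∉ ({j, k} : Finset W) := by simp [hij, hik]
    simp only [Finset.sum_insert hi, Finset.sum_pair hjk', h0, hs j i, hs k i, hs k j,
      hAG _ _ hjk] at this
    linarith
  have hxS : x ∈ LSplus (ESTAB G) := by
    refine ⟨Ym A lam x, ⟨?_, ?_, ?_, ?_⟩, rfl, fun i => rfl⟩
    · refine Ym_psd A hs h0 hp lam eps c x (fun i => by rw [hx, hd]) ?_ hep.le g L hL hg0 hgL
        (fun i hi => hA1 _ _ (hg i hi)) heL
      rw [← hm, heps]; exact hl1
    · intro p
      rcases p with _ | i <;> simp [Ym]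
    · intro i
      apply mem_cone
      · intro j
        simp only [Ym]
        split_ifs
        · exact hx0 j
        · exact mul_nonneg hlp.le (hp _ _)
      · intro j
        simp only [Ym]
        split_ifs with h
        · rw [h]
        · rw [hs]; exact hx1 i j
      · exact hx0 i
      · intro j k hjk
        simp only [Ym]
        split_ifs with h h' h'
        · exact absurd (h.trans h'.symm) hjk.ne
        · subst h; rw [hAG _ _ hjk.symm]; simp
        · subst h'; rw [hAG _ _ hjk]; simp
        · rw [hs j, hs k]; exact hx2 i j k hjk.ne
    · intro i
      apply mem_cone
      · intro j
        simp only [Ym]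
        split_ifs with h
        · simp
        · have := hx1 j i; linarith
      · intro j
        simp only [Ym]
        split_ifs with h
        · have := hc1 i; linarith
        · have := hc2 j i h; linarith
      · simp only [Ym]; have := hc1 i; linarith
      · intro j k hjk
        simp only [Ym]
        split_ifs with h h' h'
        · have := hc1 i; linarith
        · have := hc2 k i h'; linarith
        · have := hc2 j i h; linarith
        · have := hc3 i j k (Ne.symm h) (Ne.symm h') hjk
          rw [hs j, hs k]; linarith
  rw [hEq] at hxS
  have hsub : STAB G ⊆ {x | ∑ i, x i ≤ 2} := by
    apply convexHull_min
    · rintro _ ⟨S, hS, rfl⟩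
      simp only [Set.mem_ofPred_eq, Finset.sum_ite_mem, Finset.univ_inter, Finset.sum_const,
        nsmul_eq_mul, mul_one]
      exact_mod_cast h2 S hS
    · intro p hp q hq a b ha hb hab
      simp only [Set.mem_ofPred_eq, Pi.add_apply, Pi.smul_apply, smul_eq_mul,
        Finset.sum_add_distrib, ← Finset.mul_sum] at *
      nlinarith
  have hfin : ∑ i, x i ≤ 2 := hsub hxS
  have : ∑ i, x i = lam * (2 * m) - 3/2 * eps := by
    simp only [hx, Finset.sum_sub_distrib, ← Finset.mul_sum, Finset.sum_ite_eq', hd,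
      Finset.mem_univ, if_true]
    rw [hm]; ring
  rw [this] at hfin
  linarith

lemma stab_le {W : Type*} [Fintype W] (G : SimpleGraph W) (h : stabilityNumber G = 2) :
    (∀ S : Finset W, IsStableSet G ↑S → S.card ≤ 2) ∧
    ∃ S : Finset W, IsStableSet G ↑S ∧ S.card = 2 := by
  have hb : BddAbove {n | ∃ S : Finset W, IsStableSet G ↑S ∧ S.card = n} :=
    ⟨Fintype.card W, by rintro _ ⟨S, _, rfl⟩; exact Finset.card_le_univ S⟩
  have hn : {n | ∃ S : Finset W, IsStableSet G ↑S ∧ S.card = n}.Nonempty :=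
    ⟨0, ∅, by simp [IsStableSet], rfl⟩
  constructor
  · intro S hS
    rw [← h]
    exact le_csSup hb ⟨S, hS, rfl⟩
  · have := Nat.sSup_mem hn hb
    unfold stabilityNumber at h
    rw [h] at this
    exact this

theorem part1 (V : Type) [Fintype V] [DecidableEq V] (G : SimpleGraph V)
      (hst : stabilityNumber G = 2)
      (k : ℕ) (hk : 2 ≤ k) (u : ZMod (2 * k + 1) → V) (hu : Function.Injective u)
      (hadj : ∀ a b, a ≠ b → (G.Adj (u a) (u b) ↔
          (a - b ≠ (k : ZMod (2 * k + 1)) ∧ b - a ≠ (k : ZMod (2 * k + 1)))))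
      (w : V) (hw : w ∉ Set.range u) (hna : ∃ a, ¬ G.Adj w (u a)) :
        ∃ T : Finset V,
          LSplus (ESTAB (G.induce (T : Set V))) ≠ STAB (G.induce (T : Set V)) := by
  obtain ⟨a, ha⟩ := hna
  have h2 := (stab_le G hst).1
  refine ⟨Finset.univ, ?_⟩
  have hmem : ∀ v : V, v ∈ ((Finset.univ : Finset V) : Set V) := fun v => by simp
  have hk0 : (k : ZMod (2 * k + 1)) ≠ 0 := by
    rw [Ne, ZMod.natCast_eq_zero_iff]
    intro h
    have := Nat.le_of_dvd (by omega) h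
    omega
  have h2k : ((2 * k + 1 : ℕ) : ZMod (2 * k + 1)) = 0 := ZMod.natCast_self _
  push_cast at h2k
  have hcyc : ∀ b : ZMod (2 * k + 1), Gᶜ.Adj (u b) (u (b + k)) := by
    intro b
    have hne : b ≠ b + k := by simpa using hk0
    rw [SimpleGraph.compl_adj]
    refine ⟨fun h => hne (hu h), ?_⟩
    rw [hadj _ _ hne]
    intro h
    exact h.2 (by ring)
  apply key (G.induce ((Finset.univ : Finset V) : Set V)) (c := ⟨u a, hmem _⟩)
    (g := fun i => ⟨u (a + i * k), hmem _⟩) (L := 2 * k + 1) (n1 := ⟨u (a + k), hmem _⟩)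
    (n2 := ⟨u (a - k), hmem _⟩) (n3 := ⟨w, hmem _⟩)
  · intro S hS
    rw [← Finset.card_map (Function.Embedding.subtype _)]
    apply h2
    intro x hx y hy hxy
    simp only [Finset.coe_map, Set.mem_image] at hx hy
    obtain ⟨x, hx, rfl⟩ := hx
    obtain ⟨y, hy, rfl⟩ := hy
    have := hS hx hy (fun h => hxy (by rw [h]))
    simpa using this
  · simp
  · simp
  · simp
  · intro i _
    have := hcyc (a + i * k)
    rw [SimpleGraph.compl_adj] at this ⊢
    have e : a + ((i + 1 : ℕ) : ZMod (2 * k + 1)) * k = a + i * k + k := by push_cast; ring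
    rw [e]
    simpa using this
  · intro h
    have h := hu (Subtype.ext_iff.mp h)
    have h' : (k : ZMod (2 * k + 1)) + k = 0 := by linear_combination h
    have : (1 : ZMod (2 * k + 1)) = 0 := by linear_combination h2k - h'
    apply hk0
    rw [← mul_one (k : ZMod (2 * k + 1)), this, mul_zero]
  · intro h
    exact hw ⟨_, Subtype.ext_iff.mp h⟩
  · intro h
    exact hw ⟨_, Subtype.ext_iff.mp h⟩
  · have := hcyc a
    rw [SimpleGraph.compl_adj] at this ⊢
    simpa using this
  · have := (hcyc (a - k)).symm
    rw [sub_add_cancel] at this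
    rw [SimpleGraph.compl_adj] at this ⊢
    simpa using this
  · rw [SimpleGraph.compl_adj]
    refine ⟨fun h => hw ⟨_, Subtype.ext_iff.mp h⟩, ?_⟩
    simp only [SimpleGraph.comap_adj, Function.Embedding.subtype_apply]
    exact fun h => ha h.symm

end KeyAux
namespace KeyAux

lemma facet_ortho {W : Type*} [Fintype W] [DecidableEq W] (a : W → ℝ) (b : ℝ) (hb : b ≠ 0)
    (f : Fin (Fintype.card W) → (W → ℝ)) (hf : AffineIndependent ℝ f)
    (hfb : ∀ m, ∑ i, a i * f m i = b) (c : W → ℝ) (hc : ∀ m, ∑ i, c i * f m i = 0) :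
    ∀ i, c i = 0 := by
  have hli : LinearIndependent ℝ f := by
    rw [Fintype.linearIndependent_iff]
    intro w hw
    have hs : ∑ m, w m = 0 := by
      have h1 : ∑ i, a i * (∑ m, w m • f m) i = 0 := by rw [hw]; simp
      simp only [Finset.sum_apply, Pi.smul_apply, smul_eq_mul, Finset.mul_sum] at h1
      rw [Finset.sum_comm] at h1
      have h2 : ∀ m, ∑ i, a i * (w m * f m i) = w m * b := by
        intro m
        rw [← hfb m, Finset.mul_sum]
        exact Finset.sum_congr rfl fun i _ => by ring
      simp only [h2, ← Finset.sum_mul] at h1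
      exact (mul_eq_zero.mp h1).resolve_right hb
    intro m
    exact (affineIndependent_iff.mp hf) Finset.univ w hs hw m (Finset.mem_univ m)
  have hspan := hli.span_eq_top_of_card_eq_finrank' (by simp)
  intro i
  have : (∑ j, c j • LinearMap.proj (R := ℝ) (φ := fun _ : W => ℝ) j) = 0 := by
    apply LinearMap.ext_on hspan
    rintro _ ⟨m, rfl⟩
    simpa using hc m
  have h := LinearMap.congr_fun this (Pi.single i 1)
  simpa [Pi.single_apply] using h

lemma face_transfer {W : Type*} [Fintype W] [DecidableEq W] (G : SimpleGraph W) (a : W → ℝ)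
    (b : ℝ) (hv : ∀ S : Finset W, IsStableSet G ↑S → ∑ i ∈ S, a i ≤ b) (c : W → ℝ)
    (hc : ∀ S : Finset W, IsStableSet G ↑S → ∑ i ∈ S, a i = b → ∑ i ∈ S, c i = 0)
    (x : W → ℝ) (hx : x ∈ STAB G) (hxb : ∑ i, a i * x i = b) : ∑ i, c i * x i ≤ 0 := by
  classical
  obtain ⟨M, hM⟩ : ∃ M : ℝ, ∀ S : Finset W, IsStableSet G ↑S →
      ∑ i ∈ S, c i ≤ M * (b - ∑ i ∈ S, a i) := by
    have hloc : ∀ S : Finset W, ∃ M : ℝ, 0 ≤ M ∧ (IsStableSet G ↑S →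
      ∑ i ∈ S, c i ≤ M * (b - ∑ i ∈ S, a i)) := by
      intro S
      by_cases hS : IsStableSet G ↑S
      · by_cases he : ∑ i ∈ S, a i = b
        · exact ⟨0, le_rfl, fun _ => by rw [hc S hS he]; simp⟩
        · have hpos : 0 < b - ∑ i ∈ S, a i := by
            have := lt_of_le_of_ne (hv S hS) he; linarith
          refine ⟨|∑ i ∈ S, c i| / (b - ∑ i ∈ S, a i), by positivity, fun _ => ?_⟩
          rw [div_mul_cancel₀ _ hpos.ne']
          exact le_abs_self _
      · exact ⟨0, le_rfl, fun h => absurd h hS⟩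
    choose M hM0 hM using hloc
    refine ⟨∑ S, M S, fun S hS => (hM S hS).trans ?_⟩
    apply mul_le_mul_of_nonneg_right
    · exact Finset.single_le_sum (fun S _ => hM0 S) (Finset.mem_univ S)
    · have := hv S hS; linarith
  have hsub : STAB G ⊆ {x | ∑ i, c i * x i ≤ M * (b - ∑ i, a i * x i)} := by
    apply convexHull_min
    · rintro _ ⟨S, hS, rfl⟩
      simpa [Finset.sum_ite_mem] using hM S hS
    · intro p hp q hq s t hs ht hst
      have e : ∀ v : W → ℝ, ∑ i, v i * (s • p + t • q) i
          = s * ∑ i, v i * p i + t * ∑ i, v i * q i := by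
        intro v
        simp only [Pi.add_apply, Pi.smul_apply, smul_eq_mul, mul_add, Finset.sum_add_distrib,
          Finset.mul_sum]
        congr 1 <;> exact Finset.sum_congr rfl fun i _ => by ring
      simp only [Set.mem_ofPred_eq] at hp hq ⊢
      rw [e, e]
      have h1 := mul_le_mul_of_nonneg_left hp hs
      have h2 := mul_le_mul_of_nonneg_left hq ht
      have h3 : b = s * b + t * b := by rw [← add_mul, hst, one_mul]
      calc _ ≤ _ := add_le_add h1 h2
        _ = _ := by linear_combination (-M) * h3
  have := hsub hx
  simp only [Set.mem_ofPred_eq, hxb] at this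
  linarith

lemma facet_zero {W : Type*} [Fintype W] [DecidableEq W] (G : SimpleGraph W) (a : W → ℝ)
    (b : ℝ) (hb : b ≠ 0) (hv : ∀ S : Finset W, IsStableSet G ↑S → ∑ i ∈ S, a i ≤ b)
    (f : Fin (Fintype.card W) → (W → ℝ)) (hf : AffineIndependent ℝ f)
    (hfb : ∀ m, f m ∈ STAB G ∧ ∑ i, a i * f m i = b) (c : W → ℝ)
    (hc : ∀ S : Finset W, IsStableSet G ↑S → ∑ i ∈ S, a i = b → ∑ i ∈ S, c i = 0) :
    ∀ i, c i = 0 := by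
  apply facet_ortho a b hb f hf (fun m => (hfb m).2)
  intro m
  apply le_antisymm
  · exact face_transfer G a b hv c hc _ (hfb m).1 (hfb m).2
  · have := face_transfer G a b hv (fun i => - c i) (fun S h1 h2 => by
      rw [Finset.sum_neg_distrib, hc S h1 h2, neg_zero]) _ (hfb m).1 (hfb m).2
    simp only [neg_mul, Finset.sum_neg_distrib] at this
    linarith

/-- In a facet-defining graph with stability number two, each non-isolated vertex of the
complement lies on an odd closed walk of the complement. -/
lemma facet_odd {W : Type*} [Fintype W] [DecidableEq W] (G : SimpleGraph W)
    (h2 : ∀ S : Finset W, IsStableSet G ↑S → S.card ≤ 2) (hG : HasFullSupportFacet G)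
    (v w : W) (hvw : Gᶜ.Adj v w) : ∃ p : Gᶜ.Walk v v, ¬ Even p.length := by
  classical
  obtain ⟨a, b, ha, hab, f, hf, hfb⟩ := hG
  have hv : ∀ S : Finset W, IsStableSet G ↑S → ∑ i ∈ S, a i ≤ b := by
    intro S hS
    have := hab _ (subset_convexHull ℝ _ ⟨S, hS, rfl⟩)
    simpa [Finset.sum_ite_mem] using this
  have hstab1 : ∀ i, IsStableSet G ↑({i} : Finset W) := fun i => by simp [IsStableSet]
  have hb0 : 0 ≤ b := by
    have := hv ∅ (by simp [IsStableSet])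
    simpa using this
  have hb : b ≠ 0 := by
    rintro rfl
    have hneg : ∀ i, a i < 0 := fun i => by
      have := hv {i} (hstab1 i)
      rw [Finset.sum_singleton] at this
      exact lt_of_le_of_ne this (ha i)
    have hnn : ∀ x ∈ STAB G, ∀ i, 0 ≤ x i := by
      have : STAB G ⊆ {x | ∀ i, 0 ≤ x i} := by
        apply convexHull_min
        · rintro _ ⟨S, hS, rfl⟩ i
          dsimp only
          split_ifs <;> norm_num
        · intro p hp q hq s t hs ht hst i
          have := mul_nonneg hs (hp i)
          have := mul_nonneg ht (hq i)
          simp only [Pi.add_apply, Pi.smul_apply, smul_eq_mul]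
          linarith
      exact this
    have hz : ∀ m, f m = 0 := by
      intro m
      obtain ⟨h1, h3⟩ := hfb m
      have hle : ∀ i ∈ Finset.univ, a i * f m i ≤ 0 := fun i _ =>
        mul_nonpos_of_nonpos_of_nonneg (hneg i).le (hnn _ h1 i)
      funext i
      have := (Finset.sum_eq_zero_iff_of_nonpos hle).mp h3 i (Finset.mem_univ i)
      exact (mul_eq_zero.mp this).resolve_left (ha i)
    have hcard : 1 < Fintype.card W := Fintype.one_lt_card_iff.mpr ⟨v, w, hvw.ne⟩
    have := hf.injective ((hz ⟨0, by omega⟩).trans (hz ⟨1, hcard⟩).symm)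
    simp at this
  have hpos : ∀ i, 0 < a i := by
    intro i
    by_contra hcon
    have hi : a i < 0 := lt_of_le_of_ne (not_lt.mp hcon) (ha i)
    have := facet_zero G a b hb hv f hf hfb (fun j => if j = i then 1 else 0) (by
      intro S hS hSb
      rw [Finset.sum_ite_eq', if_neg]
      intro hiS
      have h1 := hv (S.erase i) (hS.mono (by simp))
      have h3 := Finset.add_sum_erase S a hiS
      linarith) i
    simp at this
  by_contra hcon
  push Not at hcon
  have hdis : ∀ u, ¬ ((∃ p : Gᶜ.Walk v u, Even p.length) ∧ ∃ p : Gᶜ.Walk v u, ¬ Even p.length) := by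
    rintro u ⟨⟨p, hp⟩, ⟨q, hq⟩⟩
    have := hcon (p.append q.reverse)
    rw [SimpleGraph.Walk.length_append, SimpleGraph.Walk.length_reverse, Nat.even_add] at this
    tauto
  have hflip1 : ∀ x y, Gᶜ.Adj x y → (∃ p : Gᶜ.Walk v x, Even p.length) →
      ∃ p : Gᶜ.Walk v y, ¬ Even p.length := by
    rintro x y hxy ⟨p, hp⟩
    refine ⟨p.concat hxy, ?_⟩
    rw [SimpleGraph.Walk.length_concat, Nat.even_add_one]
    simpa using hp
  have hflip2 : ∀ x y, Gᶜ.Adj x y → (∃ p : Gᶜ.Walk v x, ¬ Even p.length) →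
      ∃ p : Gᶜ.Walk v y, Even p.length := by
    rintro x y hxy ⟨p, hp⟩
    refine ⟨p.concat hxy, ?_⟩
    rw [SimpleGraph.Walk.length_concat, Nat.even_add_one]
    exact hp
  obtain ⟨c, hc⟩ : ∃ c : W → ℝ, ∀ u, c u = (if ∃ p : Gᶜ.Walk v u, Even p.length then 1 else 0)
      - (if ∃ p : Gᶜ.Walk v u, ¬ Even p.length then 1 else 0) := ⟨_, fun _ => rfl⟩
  have hcv : c v = 1 := by
    rw [hc, if_pos ⟨SimpleGraph.Walk.nil, by simp⟩, if_neg]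
    · norm_num
    · rintro ⟨p, hp⟩; exact hp (hcon p)
  have hz := facet_zero G a b hb hv f hf hfb c (by
    intro S hS hSb
    have hcard := h2 S hS
    have h3 : S.card = 0 ∨ S.card = 1 ∨ S.card = 2 := by omega
    rcases h3 with h | h | h
    · rw [Finset.card_eq_zero] at h
      rw [h]; simp
    · obtain ⟨u, rfl⟩ := Finset.card_eq_one.mp h
      rw [Finset.sum_singleton] at hSb ⊢
      have hiso : ∀ y, ¬ Gᶜ.Adj u y := by
        intro y huy
        have hst : IsStableSet G ↑({u, y} : Finset W) := by
          rw [SimpleGraph.compl_adj] at huy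
          intro x hx z hz hxz
          simp only [Finset.coe_insert, Finset.coe_singleton, Set.mem_insert_iff,
            Set.mem_singleton_iff] at hx hz
          rcases hx with rfl | rfl <;> rcases hz with rfl | rfl <;>
            simp_all [G.adj_comm]
        have := hv _ hst
        rw [Finset.sum_pair huy.ne] at this
        have := hpos y
        linarith
      have hno : ∀ p : Gᶜ.Walk v u, False := by
        intro p
        have q := p.reverse
        cases q with
        | nil => exact hiso _ hvw
        | cons h _ => exact hiso _ h
      rw [hc, if_neg, if_neg]
      · norm_num
      · rintro ⟨p, _⟩; exact hno p
      · rintro ⟨p, _⟩; exact hno p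
    · obtain ⟨x, y, hxy, rfl⟩ := Finset.card_eq_two.mp h
      have hadj : Gᶜ.Adj x y := by
        rw [SimpleGraph.compl_adj]
        exact ⟨hxy, hS (by simp) (by simp) hxy⟩
      rw [Finset.sum_pair hxy, hc, hc]
      have i1 := hflip1 x y hadj
      have i2 := hflip2 x y hadj
      have i3 := hflip1 y x hadj.symm
      have i4 := hflip2 y x hadj.symm
      have e1 : (∃ p : Gᶜ.Walk v x, Even p.length) ↔ ∃ p : Gᶜ.Walk v y, ¬ Even p.length :=
        ⟨i1, i4⟩
      have e2 : (∃ p : Gᶜ.Walk v x, ¬ Even p.length) ↔ ∃ p : Gᶜ.Walk v y, Even p.length :=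
        ⟨i2, i3⟩
      simp only [e1, e2]
      ring) v
  rw [hcv] at hz
  norm_num at hz

end KeyAux
namespace KeyAux

lemma comp_cycle {W : Type*} (H : SimpleGraph W)
    (htri : ∀ a b c, H.Adj a b → H.Adj a c → H.Adj b c → False)
    (hdeg : ∀ u n1 n2 n3, H.Adj u n1 → H.Adj u n2 → H.Adj u n3 → n1 ≠ n2 → n1 ≠ n3 → n2 ≠ n3 → False)
    (v : W) (hodd : ∃ p : H.Walk v v, ¬ Even p.length) :
    ∃ k : ℕ, 2 ≤ k ∧ ∃ g : ZMod (2 * k + 1) → W, Function.Injective g ∧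
      (∀ u, H.Reachable v u ↔ ∃ a, g a = u) ∧
      ∀ a b, H.Adj (g a) (g b) ↔ (b = a + 1 ∨ a = b + 1) := by
  classical
  have hex : ∃ n, ¬ Even n ∧ ∃ u, H.Reachable v u ∧ ∃ p : H.Walk u u, p.length = n := by
    obtain ⟨p, hp⟩ := hodd
    exact ⟨p.length, hp, v, SimpleGraph.Reachable.refl v, p, rfl⟩
  obtain ⟨hn, u, hvu, p, hp⟩ := Nat.find_spec hex
  have hmin := fun m (hm : m < Nat.find hex) => Nat.find_min hex hm
  generalize Nat.find hex = n at *
  have hinj : ∀ i j, i < j → j < n → p.getVert i ≠ p.getVert j := by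
    intro i j hij hj he
    have hr : H.Reachable v (p.getVert i) := hvu.trans ⟨p.take i⟩
    have l1 : ((p.take i).append ((p.drop j).copy he.symm rfl)).length = n - (j - i) := by
      rw [SimpleGraph.Walk.length_append, SimpleGraph.Walk.length_copy,
        SimpleGraph.Walk.take_length, SimpleGraph.Walk.drop_length, hp]
      omega
    have hv' : (p.drop i).getVert (j - i) = p.getVert i := by
      rw [SimpleGraph.Walk.drop_getVert, he]; congr 1; omega
    have l2 : (((p.drop i).take (j - i)).copy rfl hv').length = j - i := by
      rw [SimpleGraph.Walk.length_copy, SimpleGraph.Walk.take_length,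
        SimpleGraph.Walk.drop_length, hp]
      omega
    have m1 := hmin (n - (j - i)) (by omega)
    have m2 := hmin (j - i) (by omega)
    push Not at m1 m2
    have hE : Even (j - i) ∨ Even (n - (j - i)) := by
      by_contra hc
      push Not at hc
      exact m2 hc.1 _ hr _ l2
    rcases hE with hE | hE
    · refine m1 ?_ _ hvu _ l1
      rw [Nat.not_even_iff] at hn ⊢
      rw [Nat.even_iff] at hE
      omega
    · refine m2 ?_ _ hr _ l2
      rw [Nat.not_even_iff] at hn ⊢
      rw [Nat.even_iff] at hE
      omega
  have hadj : ∀ i < n, H.Adj (p.getVert i) (p.getVert (i+1)) := fun i hi =>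
    p.adj_getVert_succ (by omega)
  have h0 : p.getVert 0 = u := p.getVert_zero
  have hnn : p.getVert n = u := by rw [← hp]; exact p.getVert_length
  obtain ⟨k, rfl⟩ : ∃ k, n = 2 * k + 1 := Nat.not_even_iff_odd.mp hn
  have hk : 2 ≤ k := by
    by_contra hc
    have : k = 0 ∨ k = 1 := by omega
    rcases this with rfl | rfl
    · have := hadj 0 (by omega)
      rw [h0] at this
      simp only [mul_zero, zero_add] at this hnn
      rw [hnn] at this
      exact this.ne rfl
    · have a1 := hadj 0 (by omega)
      have a2 := hadj 1 (by omega)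
      have a3 := hadj 2 (by omega)
      norm_num at a1 a2 a3 hnn
      rw [hnn] at a3
      try rw [h0] at a1
      exact htri _ _ _ a1 a3.symm a2
  obtain ⟨g, hg⟩ : ∃ g : ZMod (2 * k + 1) → W, ∀ a, g a = p.getVert a.val := ⟨_, fun _ => rfl⟩
  have hval : ∀ a : ZMod (2 * k + 1), a.val < 2 * k + 1 := fun a => ZMod.val_lt a
  have hginj : Function.Injective g := by
    intro a b hab
    rw [hg, hg] at hab
    apply ZMod.val_injective
    rcases lt_trichotomy a.val b.val with h | h | h
    · exact absurd hab (hinj _ _ h (hval b))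
    · exact h
    · exact absurd hab.symm (hinj _ _ h (hval a))
  have hgadj : ∀ a, H.Adj (g a) (g (a + 1)) := by
    intro a
    have := hadj a.val (hval a)
    rw [hg, hg]
    have hone : (1 : ZMod (2 * k + 1)).val = 1 := by
      rw [ZMod.val_one_eq_one_mod]; exact Nat.mod_eq_of_lt (by omega)
    rw [ZMod.val_add, hone]
    by_cases h : a.val + 1 = 2 * k + 1
    · rw [h] at this ⊢
      rw [Nat.mod_self, h0]
      rw [hnn] at this
      exact this
    · rw [Nat.mod_eq_of_lt (by have := hval a; omega)]
      exact this
  have htwo : ∀ a : ZMod (2 * k + 1), a + 1 ≠ a - 1 := by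
    intro a h
    have h2 : ((2 : ℕ) : ZMod (2 * k + 1)) = 0 := by push_cast; linear_combination h
    rw [ZMod.natCast_eq_zero_iff] at h2
    have := Nat.le_of_dvd (by norm_num) h2
    omega
  have hnb : ∀ a x, H.Adj (g a) x → x = g (a + 1) ∨ x = g (a - 1) := by
    intro a x hx
    by_contra hc
    push Not at hc
    have h1 := hgadj a
    have h2 := (hgadj (a - 1)).symm
    rw [sub_add_cancel] at h2
    exact hdeg _ _ _ _ h1 h2 hx (fun h => htwo a (hginj h)) hc.1.symm hc.2.symm
  have hclosed : ∀ x y, (H.Walk x y) → (∃ a, g a = x) → ∃ a, g a = y := by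
    intro x y q
    induction q with
    | nil => exact id
    | cons h _ ih =>
      rintro ⟨a, rfl⟩
      rcases hnb _ _ h with h | h
      · exact ih ⟨_, h.symm⟩
      · exact ih ⟨_, h.symm⟩
  have hgu : g 0 = u := by rw [hg, ZMod.val_zero, h0]
  refine ⟨k, hk, g, hginj, ?_, ?_⟩
  · intro x
    constructor
    · intro hx
      obtain ⟨q⟩ := hvu.symm.trans hx
      exact hclosed _ _ q ⟨0, hgu⟩
    · rintro ⟨a, rfl⟩
      rw [hg]
      exact hvu.trans ⟨p.take _⟩
  · intro a b
    constructor
    · intro h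
      rcases hnb _ _ h with h | h
      · exact Or.inl (hginj h)
      · right; rw [hginj h]; ring
    · rintro (rfl | rfl)
      · exact hgadj a
      · exact (hgadj b).symm

theorem part2 (V : Type) [Fintype V] [DecidableEq V] (G : SimpleGraph V)
    (hF : HasFullSupportFacet G) (hLS : LSplus (ESTAB G) = STAB G)
    (hst : stabilityNumber G = 2) : IsJoinOfOddAntiholesAndClique G := by
  classical
  obtain ⟨h2, S, hS, hScard⟩ := stab_le G hst
  have hodd := facet_odd G h2 hF
  have htri := stable_pair_adj G h2
  have hdeg : ∀ u n1 n2 n3, Gᶜ.Adj u n1 → Gᶜ.Adj u n2 → Gᶜ.Adj u n3 →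
      n1 ≠ n2 → n1 ≠ n3 → n2 ≠ n3 → False := by
    intro u n1 n2 n3 a1 a2 a3 h12 h13 h23
    obtain ⟨p, hp⟩ := hodd u n1 a1
    exact key G h2 u p.getVert p.length hp p.getVert_zero p.getVert_length
      (fun i hi => p.adj_getVert_succ hi) n1 n2 n3 h12 h13 h23 a1 a2 a3 hLS
  obtain ⟨x, y, hxy, rfl⟩ := Finset.card_eq_two.mp hScard
  have hadj : Gᶜ.Adj x y := by
    rw [SimpleGraph.compl_adj]
    exact ⟨hxy, hS (by simp) (by simp) hxy⟩
  have hGadj : ∀ a b, a ≠ b → ¬ Gᶜ.Adj a b → G.Adj a b := by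
    intro a b hab h
    rw [SimpleGraph.compl_adj] at h
    tauto
  let I := {C : Gᶜ.ConnectedComponent // ∃ a b, Gᶜ.Adj a b ∧ Gᶜ.connectedComponentMk a = C}
  let e : I ≃ Fin (Fintype.card I) := Fintype.equivFin I
  refine ⟨Fintype.card I, fun i => (e.symm i).1.supp, {a | ∀ b, ¬ Gᶜ.Adj a b},
    ?_, ?_, ?_, ?_, ?_, ?_, ?_, ?_⟩
  · exact Fintype.card_pos_iff.mpr ⟨⟨_, x, y, hadj, rfl⟩⟩
  · intro i j hij
    rw [Set.disjoint_left]
    intro a ha hb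
    rw [SimpleGraph.ConnectedComponent.mem_supp_iff] at ha hb
    exact hij (e.symm.injective (Subtype.ext (ha.symm.trans hb)))
  · intro i
    rw [Set.disjoint_left]
    intro a ha hQ
    obtain ⟨c, d, hcd, hC⟩ := (e.symm i).2
    rw [SimpleGraph.ConnectedComponent.mem_supp_iff, ← hC, SimpleGraph.ConnectedComponent.eq] at ha
    obtain ⟨q⟩ := ha
    cases q with
    | nil => exact hQ _ hcd
    | cons h _ => exact hQ _ h
  · ext a
    simp only [Set.mem_union, Set.mem_iUnion, Set.mem_univ, iff_true]
    by_cases h : ∃ b, Gᶜ.Adj a b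
    · right
      obtain ⟨b, hb⟩ := h
      refine ⟨e ⟨_, a, b, hb, rfl⟩, ?_⟩
      rw [Equiv.symm_apply_apply, SimpleGraph.ConnectedComponent.mem_supp_iff]
    · left
      push Not at h
      exact h
  · intro i
    obtain ⟨c, d, hcd, hC⟩ := (e.symm i).2
    dsimp only
    rw [← hC]
    obtain ⟨k, hk, g, hginj, hrange, hgadj⟩ := comp_cycle Gᶜ htri hdeg c (hodd c d hcd)
    refine ⟨k, hk, ⟨SimpleGraph.Iso.symm ⟨Equiv.ofBijective
      (fun a => (⟨g a, ?_⟩ : (Gᶜ.connectedComponentMk c).supp)) ⟨?_, ?_⟩, ?_⟩⟩⟩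
    · rw [SimpleGraph.ConnectedComponent.mem_supp_iff, SimpleGraph.ConnectedComponent.eq]
      exact ((hrange _).mpr ⟨a, rfl⟩).symm
    · intro a b hab
      exact hginj (Subtype.ext_iff.mp hab)
    · rintro ⟨z, hz⟩
      rw [SimpleGraph.ConnectedComponent.mem_supp_iff, SimpleGraph.ConnectedComponent.eq] at hz
      obtain ⟨a, ha⟩ := (hrange z).mp hz.symm
      exact ⟨a, Subtype.ext ha⟩
    · intro a b
      have h1 := hgadj a b
      rw [SimpleGraph.compl_adj] at h1
      simp only [SimpleGraph.comap_adj,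
        Function.Embedding.subtype_apply, SimpleGraph.compl_adj, cycleG, SimpleGraph.fromRel_adj]
      rw [hginj.ne_iff] at h1
      by_cases hab : a = b
      · subst hab; simp
      · constructor
        · intro h; exact ⟨hab, fun h' => (h1.mpr h'.2).2 h⟩
        · rintro ⟨_, h⟩
          by_contra h'
          exact h ⟨hab, h1.mp ⟨hab, h'⟩⟩
  · intro a ha b hb hab
    exact hGadj a b hab (ha b)
  · intro i j a b hij ha hb
    dsimp only at ha hb
    rw [SimpleGraph.ConnectedComponent.mem_supp_iff] at ha hb
    have hne : Gᶜ.connectedComponentMk a ≠ Gᶜ.connectedComponentMk b := by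
      intro h
      exact hij (e.symm.injective (Subtype.ext (ha.symm.trans (h.trans hb))))
    apply hGadj
    · rintro rfl; exact hne rfl
    · intro h
      exact hne (SimpleGraph.ConnectedComponent.eq.mpr h.reachable)
  · intro i a b ha hb
    dsimp only at ha
    apply hGadj
    · rintro rfl
      obtain ⟨c, d, hcd, hC⟩ := (e.symm i).2
      rw [SimpleGraph.ConnectedComponent.mem_supp_iff, ← hC,
        SimpleGraph.ConnectedComponent.eq] at ha
      obtain ⟨q⟩ := ha
      cases q with
      | nil => exact hb _ hcd
      | cons h _ => exact hb _ h
    · intro h; exact hb _ h.symm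

end KeyAux

/-- (1) a graph G with α(G) = 2 containing an induced odd antihole C̄_{2k+1}
(k ≥ 2) and a vertex w outside it with at least one neighbor and at least one non-neighbor
in C̄ contains an LS₊-imperfect induced subgraph; (2) in particular, every facet-defining
LS₊-perfect graph G with α(G) = 2 is an odd antihole or the complete join of odd
antihole(s) and a (possibly empty) clique. -/
theorem stmt7 :
    (∀ (V : Type) [Fintype V] [DecidableEq V] (G : SimpleGraph V),
      stabilityNumber G = 2 →
      ∀ (k : ℕ), 2 ≤ k → ∀ (u : ZMod (2 * k + 1) → V), Function.Injective u →
        (∀ a b, a ≠ b → (G.Adj (u a) (u b) ↔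
          (a - b ≠ (k : ZMod (2 * k + 1)) ∧ b - a ≠ (k : ZMod (2 * k + 1))))) →
      ∀ w : V, w ∉ Set.range u → (∃ a, G.Adj w (u a)) → (∃ a, ¬ G.Adj w (u a)) →
        ∃ T : Finset V,
          LSplus (ESTAB (G.induce (T : Set V))) ≠ STAB (G.induce (T : Set V))) ∧
    (∀ (V : Type) [Fintype V] [DecidableEq V] (G : SimpleGraph V),
      HasFullSupportFacet G → LSplus (ESTAB G) = STAB G → stabilityNumber G = 2 →
        IsOddAntihole G ∨ IsJoinOfOddAntiholesAndClique G) := by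
  refine ⟨?_, ?_⟩
  · intro V _ _ G hst k hk u hu hadj w hw _ hna
    exact KeyAux.part1 V G hst k hk u hu hadj w hw hna
  · intro V _ _ G hF hLS hst
    exact Or.inr (KeyAux.part2 V G hF hLS hst)
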